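/- arXiv:1301.3708 — 8 statements merged into one kernel-verified Lean document; each statement's English description precedes it below -/
import Mathlib

section
/- Let n_T, n_R, B ≥ 1 be integers, let S_Q ∈ ℂ^{B×B} and S_R ∈ ℂ^{n_R×n_R} be Hermitian positive definite, let 𝓘_T ∈ ℂ^{n_T×n_T} and 𝓘_R ∈ ℂ^{n_R×n_R} be Hermitian positive semidefinite, and let c > 0. For P ∈ ℂ^{n_T×B} set P̃ = P^T ⊗ I_{n_R}. Then P̃^H (S_Q^T ⊗ S_R)^{-1} P̃ ⪰ c 𝓘_T^T ⊗ 𝓘_R holds if and only if P S_Q^{-1} P^H ⪰ c λ_max(S_R^{1/2} 𝓘_R S_R^{1/2}) 𝓘_T, where λ_max(S_R^{1/2} 𝓘_R S_R^{1/2}) is the largest eigenvalue of the Hermitian matrix S_R^{1/2} 𝓘_R S_R^{1/2}. (Theorem 2: reduction of the Kronecker-structured constraint.) -/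
open Matrix Finset
open scoped ComplexOrder Kronecker MatrixOrder

/-- The largest eigenvalue of a Hermitian matrix. -/
noncomputable def lmax {n : ℕ} {A : Matrix (Fin n) (Fin n) ℂ} (hA : A.IsHermitian) : ℝ :=
  ⨆ i, hA.eigenvalues i

/-!
Congruence by `1 ⊗ S_R^{1/2}` turns `A ⊗ S_R⁻¹ - T ⊗ 𝓘_R` into `A ⊗ 1 - T ⊗ M`, where
`M = S_R^{1/2} 𝓘_R S_R^{1/2}` has largest eigenvalue `μ`. Compressing the latter along
`x ↦ x ⊗ v`, with `v` a unit eigenvector of `M` for `μ`, leaves `A - μ T`; conversely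
`A ⊗ 1 - T ⊗ M = (A - μ T) ⊗ 1 + T ⊗ (μ - M)` is a sum of Kronecker products of positive
semidefinite matrices.
-/

section KroneckerLoewner

theorem conjTranspose_kronecker_mul_kronecker_mul_kronecker {R l l' m m' : Type*}
    [CommSemiring R] [StarRing R] [Fintype l] [Fintype m] (V : Matrix l l' R) (W : Matrix m m' R)
    (A : Matrix l l R) (X : Matrix m m R) :
    (V ⊗ₖ W)ᴴ * (A ⊗ₖ X) * (V ⊗ₖ W) = (Vᴴ * A * V) ⊗ₖ (Wᴴ * X * W) := by
  rw [conjTranspose_kronecker, ← mul_kronecker_mul, ← mul_kronecker_mul]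

variable {𝕜 m n b : Type*} [RCLike 𝕜] [Finite m] [Fintype n] [Fintype b]

theorem posSemidef_dotProduct_smul_sub_of_kronecker {A T : Matrix m m 𝕜} {X Y : Matrix n n 𝕜}
    (h : (A ⊗ₖ X - T ⊗ₖ Y).PosSemidef) (v : n → 𝕜) :
    ((star v ⬝ᵥ X *ᵥ v) • A - (star v ⬝ᵥ Y *ᵥ v) • T).PosSemidef := by
  classical
  have := Fintype.ofFinite m
  let V : Matrix (m × n) (m × Unit) 𝕜 := (1 : Matrix m m 𝕜) ⊗ₖ replicateCol Unit v
  have compress (C : Matrix m m 𝕜) (Z : Matrix n n 𝕜) :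
      (Vᴴ * (C ⊗ₖ Z) * V).submatrix (·, ()) (·, ()) = (star v ⬝ᵥ Z *ᵥ v) • C := by
    rw [conjTranspose_kronecker_mul_kronecker_mul_kronecker, conjTranspose_one, Matrix.one_mul,
      Matrix.mul_one, Matrix.mul_assoc, ← replicateCol_mulVec, conjTranspose_replicateCol]
    ext i j
    simp [replicateRow_mul_replicateCol_apply, mul_comm]
  have hV := (h.conjTranspose_mul_mul_same V).submatrix (·, ())
  rwa [Matrix.mul_sub, Matrix.sub_mul, submatrix_sub, Pi.sub_apply, Pi.sub_apply, compress,
    compress] at hV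

theorem posSemidef_kronecker_sub_conjugate_iff [DecidableEq n] {A T : Matrix m m 𝕜}
    {X Y U : Matrix n n 𝕜} (hU : IsUnit U) :
    (A ⊗ₖ (Uᴴ * X * U) - T ⊗ₖ (Uᴴ * Y * U)).PosSemidef ↔ (A ⊗ₖ X - T ⊗ₖ Y).PosSemidef := by
  classical
  have := Fintype.ofFinite m
  have conj (C : Matrix m m 𝕜) (Z : Matrix n n 𝕜) :
      C ⊗ₖ (Uᴴ * Z * U) = star ((1 : Matrix m m 𝕜) ⊗ₖ U) * (C ⊗ₖ Z) * (1 ⊗ₖ U) := by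
    rw [star_eq_conjTranspose, conjTranspose_kronecker_mul_kronecker_mul_kronecker,
      conjTranspose_one, one_mul, mul_one]
  rw [conj, conj, ← sub_mul, ← mul_sub]
  exact (isUnit_one.kronecker hU).posSemidef_star_left_conjugate_iff

theorem cfcSqrt_mul_inv_mul_cfcSqrt [DecidableEq n] {S : Matrix n n 𝕜} (hS : S.PosDef) :
    CFC.sqrt S * S⁻¹ * CFC.sqrt S = 1 := by
  have hR : IsUnit (CFC.sqrt S).det :=
    (isUnit_iff_isUnit_det _).mp ((CFC.isUnit_sqrt_iff S hS.posSemidef.nonneg).mpr hS.isUnit)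
  calc CFC.sqrt S * S⁻¹ * CFC.sqrt S
      = CFC.sqrt S * (CFC.sqrt S * CFC.sqrt S)⁻¹ * CFC.sqrt S := by
        rw [CFC.sqrt_mul_sqrt_self S hS.posSemidef.nonneg]
    _ = (CFC.sqrt S * (CFC.sqrt S)⁻¹) * ((CFC.sqrt S)⁻¹ * CFC.sqrt S) := by
        simp only [Matrix.mul_inv_rev, mul_assoc]
    _ = 1 := by rw [mul_nonsing_inv _ hR, nonsing_inv_mul _ hR, one_mul]

theorem posSemidef_iSup_eigenvalues_smul_one_sub [DecidableEq n] {M : Matrix n n 𝕜}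
    (hM : M.IsHermitian) : ((⨆ i, hM.eigenvalues i) • (1 : Matrix n n 𝕜) - M).PosSemidef := by
  rw [← Matrix.le_iff, ← Algebra.algebraMap_eq_smul_one]
  refine le_algebraMap_of_spectrum_le ?_ (ha := hM)
  rw [hM.spectrum_real_eq_range_eigenvalues]
  rintro _ ⟨i, rfl⟩
  exact le_ciSup (Set.finite_range hM.eigenvalues).bddAbove i

theorem posSemidef_kronecker_one_sub_kronecker_iff [DecidableEq n] [Nonempty n]
    {A T : Matrix m m 𝕜} (hT : T.PosSemidef) {M : Matrix n n 𝕜} (hM : M.IsHermitian) :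
    (A ⊗ₖ (1 : Matrix n n 𝕜) - T ⊗ₖ M).PosSemidef ↔
      (A - (⨆ i, hM.eigenvalues i) • T).PosSemidef := by
  constructor
  · intro h
    obtain ⟨k, hk⟩ := exists_eq_ciSup_of_finite (f := hM.eigenvalues)
    have hunit : star ⇑(hM.eigenvectorBasis k) ⬝ᵥ ⇑(hM.eigenvectorBasis k) = 1 := by
      rw [dotProduct_comm, ← EuclideanSpace.inner_eq_star_dotProduct]
      simp
    have hv := posSemidef_dotProduct_smul_sub_of_kronecker h (hM.eigenvectorBasis k)
    rwa [one_mulVec, hM.mulVec_eigenvectorBasis, dotProduct_smul, hunit, one_smul, smul_assoc,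
      one_smul, hk] at hv
  · intro h
    have split : A ⊗ₖ (1 : Matrix n n 𝕜) - T ⊗ₖ M =
        (A - (⨆ i, hM.eigenvalues i) • T) ⊗ₖ (1 : Matrix n n 𝕜) +
          T ⊗ₖ ((⨆ i, hM.eigenvalues i) • (1 : Matrix n n 𝕜) - M) := by
      ext ⟨i, k⟩ ⟨j, l⟩
      simp only [kroneckerMap_apply, Matrix.sub_apply, Matrix.add_apply, Matrix.smul_apply,
        RCLike.real_smul_eq_coe_mul]
      ring
    rw [split]
    exact (h.kronecker .one).add (hT.kronecker (posSemidef_iSup_eigenvalues_smul_one_sub hM))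

theorem posSemidef_kronecker_inv_sub_kronecker_iff [DecidableEq n] [Nonempty n]
    {A T : Matrix m m 𝕜} (hT : T.PosSemidef) {S H : Matrix n n 𝕜} (hS : S.PosDef)
    (hM : (CFC.sqrt S * H * CFC.sqrt S).IsHermitian) :
    (A ⊗ₖ S⁻¹ - T ⊗ₖ H).PosSemidef ↔ (A - (⨆ i, hM.eigenvalues i) • T).PosSemidef := by
  have hsqrt : (CFC.sqrt S)ᴴ = CFC.sqrt S := (CFC.sqrt_nonneg S).posSemidef.isHermitian
  rw [← posSemidef_kronecker_one_sub_kronecker_iff hT hM, ← cfcSqrt_mul_inv_mul_cfcSqrt hS]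
  nth_rw 1 3 [← hsqrt]
  exact (posSemidef_kronecker_sub_conjugate_iff
    ((CFC.isUnit_sqrt_iff S hS.posSemidef.nonneg).mpr hS.isUnit)).symm

-- `Q` takes the place of `S_Q⁻¹`.
theorem stmt2_general [DecidableEq n] [Nonempty n] {T : Matrix m m 𝕜} (hT : T.PosSemidef)
    {S H : Matrix n n 𝕜} (hS : S.PosDef) {c : ℝ} (hc : 0 ≤ c) (P : Matrix m b 𝕜)
    (Q : Matrix b b 𝕜) (hM : (CFC.sqrt S * H * CFC.sqrt S).IsHermitian) :
    ((Pᵀ ⊗ₖ (1 : Matrix n n 𝕜))ᴴ * (Qᵀ ⊗ₖ S⁻¹) * (Pᵀ ⊗ₖ (1 : Matrix n n 𝕜))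
        - c • (Tᵀ ⊗ₖ H)).PosSemidef ↔
      (P * Q * Pᴴ - (c * ⨆ i, hM.eigenvalues i) • T).PosSemidef := by
  have hP : Pᵀᴴ * Qᵀ * Pᵀ = (P * Q * Pᴴ)ᵀ := by
    rw [transpose_mul, transpose_mul, Matrix.mul_assoc]
    rfl
  rw [conjTranspose_kronecker_mul_kronecker_mul_kronecker, hP, conjTranspose_one, one_mul,
    mul_one, ← smul_kronecker,
    posSemidef_kronecker_inv_sub_kronecker_iff (hT.transpose.smul hc) hS hM, smul_smul,
    mul_comm _ c, ← transpose_smul, ← transpose_sub, posSemidef_transpose_iff]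

end KroneckerLoewner

/-- Theorem 2: the Kronecker-structured constraint
`P̃ᴴ (S_Qᵀ ⊗ S_R)⁻¹ P̃ ⪰ c 𝓘_Tᵀ ⊗ 𝓘_R` (with `P̃ = Pᵀ ⊗ I`) holds iff
`P S_Q⁻¹ Pᴴ ⪰ c λ_max(S_R^{1/2} 𝓘_R S_R^{1/2}) 𝓘_T`. -/
theorem stmt2 (nT nR B : ℕ) (hnT : 1 ≤ nT) (hnR : 1 ≤ nR) (hB : 1 ≤ B)
    (SQ : Matrix (Fin B) (Fin B) ℂ) (hSQ : SQ.PosDef)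
    (SR : Matrix (Fin nR) (Fin nR) ℂ) (hSR : SR.PosDef)
    (IT : Matrix (Fin nT) (Fin nT) ℂ) (hIT : IT.PosSemidef)
    (IR : Matrix (Fin nR) (Fin nR) ℂ) (hIR : IR.PosSemidef)
    (c : ℝ) (hc : 0 < c)
    (P : Matrix (Fin nT) (Fin B) ℂ)
    (hM : (CFC.sqrt SR * IR * CFC.sqrt SR).IsHermitian) :
    ((Pᵀ ⊗ₖ (1 : Matrix (Fin nR) (Fin nR) ℂ))ᴴ * (SQᵀ ⊗ₖ SR)⁻¹ *
        (Pᵀ ⊗ₖ (1 : Matrix (Fin nR) (Fin nR) ℂ))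
      - ((c : ℂ) • (ITᵀ ⊗ₖ IR))).PosSemidef ↔
    (P * SQ⁻¹ * Pᴴ - ((c * lmax hM : ℝ) : ℂ) • IT).PosSemidef := by
  have : Nonempty (Fin nR) := ⟨⟨0, hnR⟩⟩
  rw [inv_kronecker, ← transpose_nonsing_inv]
  exact stmt2_general hIT hSR hc.le P SQ⁻¹ hM
end

section
/- Let n_T, n_R, B ≥ 1 be integers, let S_Q ∈ ℂ^{B×B} and S_R ∈ ℂ^{n_R×n_R} be Hermitian positive definite, let R_T ∈ ℂ^{n_T×n_T} and R_R ∈ ℂ^{n_R×n_R} be Hermitian positive definite, let 𝓘_R ∈ ℂ^{n_R×n_R} be Hermitian positive semidefinite, and let c > 0. Assume 𝓘_T = R_T^{-1}, and set R = R_T^T ⊗ R_R. For P ∈ ℂ^{n_T×B} set P̃ = P^T ⊗ I_{n_R}. Then R^{-1} + P̃^H (S_Q^T ⊗ S_R)^{-1} P̃ ⪰ c 𝓘_T^T ⊗ 𝓘_R holds if and only if P S_Q^{-1} P^H ⪰ λ_max(S_R^{1/2} (c 𝓘_R − R_R^{-1}) S_R^{1/2}) 𝓘_T, where λ_max denotes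 the largest eigenvalue of the indicated Hermitian matrix. (Theorem 3, case 𝓘_T = R_T^{-1}.) -/
open Matrix Finset
open scoped ComplexOrder Kronecker MatrixOrder

/-!
For a Hermitian `M` with largest eigenvalue `l` and `T ⪰ 0`,
`A ⊗ I - T ⊗ M = (A - l T) ⊗ I + T ⊗ (l I - M)`, where the last summand is positive semidefinite;
conversely, compressing the left-hand side by `I ⊗ v`, with `v` a unit eigenvector for `l`, leaves
`A - l T`. So `A ⊗ I ⪰ T ⊗ M` iff `A ⪰ l T`. When `𝓘_T = R_T⁻¹`, both `R⁻¹` and `c 𝓘_Tᵀ ⊗ 𝓘_R` have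
the left factor `𝓘_Tᵀ`, so the constraint reads
`(P S_Q⁻¹ Pᴴ)ᵀ ⊗ S_R⁻¹ ⪰ 𝓘_Tᵀ ⊗ (c 𝓘_R - R_R⁻¹)`, and the congruence by `I ⊗ S_R^{1/2}` turns
`S_R⁻¹` into `I`.
-/

section Spectral

variable {𝕜 m : Type*} [RCLike 𝕜] [Fintype m] [DecidableEq m] {M : Matrix m m 𝕜}

/-- The largest eigenvalue of a Hermitian matrix over `ℝ` or `ℂ` with an arbitrary finite index
type, extending `lmax`. It has the junk value `0` when the index type is empty. -/
noncomputable def maxEigenvalue (hM : M.IsHermitian) : ℝ :=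
  ⨆ i, hM.eigenvalues i

theorem eigenvalues_le_maxEigenvalue (hM : M.IsHermitian) (i : m) :
    hM.eigenvalues i ≤ maxEigenvalue hM :=
  le_ciSup (Set.finite_range _).bddAbove i

theorem posSemidef_maxEigenvalue_smul_one_sub (hM : M.IsHermitian) :
    ((maxEigenvalue hM : 𝕜) • 1 - M).PosSemidef := by
  have spectrum_le : ∀ x ∈ spectrum ℝ M, x ≤ maxEigenvalue hM := by
    rw [hM.spectrum_real_eq_range_eigenvalues]
    rintro _ ⟨i, rfl⟩
    exact eigenvalues_le_maxEigenvalue hM i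
  have hle : M ≤ algebraMap ℝ (Matrix m m 𝕜) (maxEigenvalue hM) :=
    le_algebraMap_of_spectrum_le spectrum_le hM
  rwa [Algebra.algebraMap_eq_smul_one, RCLike.real_smul_eq_coe_smul (K := 𝕜)] at hle

theorem exists_unit_eigenvector (hM : M.IsHermitian) (i : m) :
    ∃ v : m → 𝕜, star v ⬝ᵥ v = 1 ∧ M *ᵥ v = (hM.eigenvalues i : 𝕜) • v := by
  refine ⟨hM.eigenvectorBasis i, ?_, ?_⟩
  · rw [dotProduct_comm, ← EuclideanSpace.inner_eq_star_dotProduct]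
    exact inner_self_eq_one_of_norm_eq_one (hM.eigenvectorBasis.orthonormal.1 i)
  · rw [hM.mulVec_eigenvectorBasis, RCLike.real_smul_eq_coe_smul (K := 𝕜)]

theorem exists_maxEigenvalue_compression [Nonempty m] (hM : M.IsHermitian) :
    ∃ V : Matrix m Unit 𝕜, Vᴴ * V = 1 ∧ Vᴴ * M * V = (maxEigenvalue hM : 𝕜) • 1 := by
  obtain ⟨i, hi⟩ : ∃ i, hM.eigenvalues i = maxEigenvalue hM := exists_eq_ciSup_of_finite
  obtain ⟨v, norm_v, eigen_v⟩ := exists_unit_eigenvector hM i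
  have isometry : (replicateCol Unit v)ᴴ * replicateCol Unit v = 1 := by
    ext
    simpa [Matrix.mul_apply, dotProduct] using norm_v
  refine ⟨replicateCol Unit v, isometry, ?_⟩
  rw [Matrix.mul_assoc, ← replicateCol_mulVec, eigen_v, hi, replicateCol_smul, Matrix.mul_smul,
    isometry]

end Spectral

theorem sqrt_mul_inv_mul_sqrt {𝕜 m : Type*} [RCLike 𝕜] [Fintype m] [DecidableEq m]
    {S : Matrix m m 𝕜} (hS : S.PosDef) : CFC.sqrt S * S⁻¹ * CFC.sqrt S = 1 := by
  have isUnit_det : IsUnit (CFC.sqrt S).det :=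
    (isUnit_iff_isUnit_det _).1 hS.isStrictlyPositive.isUnit_cfcSqrt
  nth_rw 2 [← CFC.sqrt_mul_sqrt_self S hS.posSemidef.nonneg]
  rw [Matrix.mul_inv_rev, ← Matrix.mul_assoc, mul_nonsing_inv _ isUnit_det, Matrix.one_mul,
    nonsing_inv_mul _ isUnit_det]

section KroneckerSub

variable {α l m n p : Type*} [NonUnitalNonAssocRing α]

theorem sub_kronecker (A₁ A₂ : Matrix l m α) (B : Matrix n p α) :
    (A₁ - A₂) ⊗ₖ B = A₁ ⊗ₖ B - A₂ ⊗ₖ B := by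
  ext
  exact sub_mul ..

theorem kronecker_sub (A : Matrix l m α) (B₁ B₂ : Matrix n p α) :
    A ⊗ₖ (B₁ - B₂) = A ⊗ₖ B₁ - A ⊗ₖ B₂ := by
  ext
  exact mul_sub ..

theorem one_kronecker_conj_kronecker_sub {R : Type*} [CommRing R] [StarRing R] [Fintype n]
    [DecidableEq n] [Fintype m] (A T : Matrix n n R) (C D : Matrix m m R) (V : Matrix m p R) :
    ((1 : Matrix n n R) ⊗ₖ V)ᴴ * (A ⊗ₖ C - T ⊗ₖ D) * ((1 : Matrix n n R) ⊗ₖ V) =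
      A ⊗ₖ (Vᴴ * C * V) - T ⊗ₖ (Vᴴ * D * V) := by
  simp only [conjTranspose_kronecker, conjTranspose_one, Matrix.mul_sub, Matrix.sub_mul,
    ← mul_kronecker_mul, Matrix.one_mul, Matrix.mul_one]

end KroneckerSub

section KroneckerLoewner

variable {𝕜 n m : Type*} [RCLike 𝕜] [DecidableEq m]

theorem posSemidef_of_kronecker_one [Nonempty m] {A : Matrix n n 𝕜}
    (h : (A ⊗ₖ (1 : Matrix m m 𝕜)).PosSemidef) : A.PosSemidef := by
  obtain ⟨i⟩ := ‹Nonempty m›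
  have hA : (A ⊗ₖ (1 : Matrix m m 𝕜)).submatrix (fun a ↦ (a, i)) (fun a ↦ (a, i)) = A := by
    ext
    simp
  exact hA ▸ h.submatrix fun a ↦ (a, i)

variable [Finite n] [Fintype m]

theorem posSemidef_kronecker_sub_conj_iff (A T : Matrix n n 𝕜) (C D : Matrix m m 𝕜)
    {V : Matrix m m 𝕜} (hV : IsUnit V) :
    (A ⊗ₖ (Vᴴ * C * V) - T ⊗ₖ (Vᴴ * D * V)).PosSemidef ↔ (A ⊗ₖ C - T ⊗ₖ D).PosSemidef := by
  classical
  have := Fintype.ofFinite n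
  have isUnit_kronecker : IsUnit ((1 : Matrix n n 𝕜) ⊗ₖ V) := by
    rw [isUnit_iff_isUnit_det] at hV ⊢
    simpa only [det_kronecker, det_one, one_pow, one_mul] using hV.pow _
  rw [← one_kronecker_conj_kronecker_sub]
  exact isUnit_kronecker.posSemidef_star_left_conjugate_iff

theorem posSemidef_kronecker_one_sub_iff [Nonempty m] {A T : Matrix n n 𝕜} (hT : T.PosSemidef)
    {M : Matrix m m 𝕜} (hM : M.IsHermitian) :
    (A ⊗ₖ (1 : Matrix m m 𝕜) - T ⊗ₖ M).PosSemidef ↔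
      (A - (maxEigenvalue hM : 𝕜) • T).PosSemidef := by
  classical
  have := Fintype.ofFinite n
  constructor
  · intro h
    obtain ⟨V, isometry, compression⟩ := exists_maxEigenvalue_compression hM
    have compressed := h.conjTranspose_mul_mul_same ((1 : Matrix n n 𝕜) ⊗ₖ V)
    rw [one_kronecker_conj_kronecker_sub, Matrix.mul_one, isometry, compression, kronecker_smul,
      ← smul_kronecker, ← sub_kronecker] at compressed
    exact posSemidef_of_kronecker_one compressed
  · intro h
    have split : A ⊗ₖ (1 : Matrix m m 𝕜) - T ⊗ₖ M =
        (A - (maxEigenvalue hM : 𝕜) • T) ⊗ₖ (1 : Matrix m m 𝕜) +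
          T ⊗ₖ ((maxEigenvalue hM : 𝕜) • 1 - M) := by
      rw [sub_kronecker, kronecker_sub, smul_kronecker, kronecker_smul, sub_add_sub_cancel]
    rw [split]
    exact (h.kronecker .one).add (hT.kronecker (posSemidef_maxEigenvalue_smul_one_sub hM))

theorem posSemidef_kronecker_inv_sub_iff [Nonempty m] {A T : Matrix n n 𝕜} (hT : T.PosSemidef)
    {S K : Matrix m m 𝕜} (hS : S.PosDef) (hM : (CFC.sqrt S * K * CFC.sqrt S).IsHermitian) :
    (A ⊗ₖ S⁻¹ - T ⊗ₖ K).PosSemidef ↔ (A - (maxEigenvalue hM : 𝕜) • T).PosSemidef := by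
  have hermitian_sqrt : (CFC.sqrt S)ᴴ = CFC.sqrt S := (CFC.sqrt_nonneg S).star_eq
  rw [← posSemidef_kronecker_sub_conj_iff A T S⁻¹ K hS.isStrictlyPositive.isUnit_cfcSqrt,
    hermitian_sqrt, sqrt_mul_inv_mul_sqrt hS, posSemidef_kronecker_one_sub_iff hT hM]

end KroneckerLoewner

theorem kronecker_one_conj_kronecker {α t r b : Type*} [CommSemiring α] [StarRing α] [Fintype b]
    [Fintype r] [DecidableEq r] (P : Matrix t b α) (W : Matrix b b α) (C : Matrix r r α) :
    (Pᵀ ⊗ₖ (1 : Matrix r r α))ᴴ * (Wᵀ ⊗ₖ C) * (Pᵀ ⊗ₖ (1 : Matrix r r α)) =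
      (P * W * Pᴴ)ᵀ ⊗ₖ C := by
  rw [conjTranspose_kronecker, conjTranspose_one, ← mul_kronecker_mul, ← mul_kronecker_mul,
    Matrix.one_mul, Matrix.mul_one, transpose_mul, transpose_mul, Matrix.mul_assoc,
    conjTranspose_transpose_eq_transpose_conjTranspose]

/-- `W` and `G` play the roles of `S_Q⁻¹` and `R_R⁻¹`. -/
theorem stmt5_general {𝕜 t r b : Type*} [RCLike 𝕜] [Finite t] [Fintype r] [DecidableEq r]
    [Nonempty r] [Fintype b] (W : Matrix b b 𝕜) {SR : Matrix r r 𝕜} (hSR : SR.PosDef)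
    {IT : Matrix t t 𝕜} (hIT : IT.PosSemidef) (G IR : Matrix r r 𝕜) (c : 𝕜) (P : Matrix t b 𝕜)
    (hM : (CFC.sqrt SR * (c • IR - G) * CFC.sqrt SR).IsHermitian) :
    (ITᵀ ⊗ₖ G +
        (Pᵀ ⊗ₖ (1 : Matrix r r 𝕜))ᴴ * (Wᵀ ⊗ₖ SR⁻¹) * (Pᵀ ⊗ₖ (1 : Matrix r r 𝕜))
      - c • (ITᵀ ⊗ₖ IR)).PosSemidef ↔
    (P * W * Pᴴ - (maxEigenvalue hM : 𝕜) • IT).PosSemidef := by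
  have regroup : ITᵀ ⊗ₖ G + (P * W * Pᴴ)ᵀ ⊗ₖ SR⁻¹ - c • (ITᵀ ⊗ₖ IR) =
      (P * W * Pᴴ)ᵀ ⊗ₖ SR⁻¹ - ITᵀ ⊗ₖ (c • IR - G) := by
    rw [kronecker_sub, kronecker_smul]
    abel
  rw [kronecker_one_conj_kronecker, regroup,
    posSemidef_kronecker_inv_sub_iff hIT.transpose hSR hM, ← transpose_smul, ← transpose_sub,
    posSemidef_transpose_iff]

/-- Theorem 3 (case `𝓘_T = R_T⁻¹`): with `R = R_Tᵀ ⊗ R_R` and `𝓘_T = R_T⁻¹`, the constraint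
`R⁻¹ + P̃ᴴ (S_Qᵀ ⊗ S_R)⁻¹ P̃ ⪰ c 𝓘_Tᵀ ⊗ 𝓘_R` (with `P̃ = Pᵀ ⊗ I`) holds iff
`P S_Q⁻¹ Pᴴ ⪰ λ_max(S_R^{1/2} (c 𝓘_R − R_R⁻¹) S_R^{1/2}) 𝓘_T`. -/
theorem stmt5 (nT nR B : ℕ) (hnT : 1 ≤ nT) (hnR : 1 ≤ nR) (hB : 1 ≤ B)
    (SQ : Matrix (Fin B) (Fin B) ℂ) (hSQ : SQ.PosDef)
    (SR : Matrix (Fin nR) (Fin nR) ℂ) (hSR : SR.PosDef)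
    (RT : Matrix (Fin nT) (Fin nT) ℂ) (hRT : RT.PosDef)
    (RR : Matrix (Fin nR) (Fin nR) ℂ) (hRR : RR.PosDef)
    (IT : Matrix (Fin nT) (Fin nT) ℂ) (hIT : IT.PosSemidef)
    (hITeq : IT = RT⁻¹)
    (IR : Matrix (Fin nR) (Fin nR) ℂ) (hIR : IR.PosSemidef)
    (c : ℝ) (hc : 0 < c)
    (P : Matrix (Fin nT) (Fin B) ℂ)
    (hM : (CFC.sqrt SR * ((c : ℂ) • IR - RR⁻¹) *
      CFC.sqrt SR).IsHermitian) :
    ((RTᵀ ⊗ₖ RR)⁻¹ +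
        (Pᵀ ⊗ₖ (1 : Matrix (Fin nR) (Fin nR) ℂ))ᴴ * (SQᵀ ⊗ₖ SR)⁻¹ *
          (Pᵀ ⊗ₖ (1 : Matrix (Fin nR) (Fin nR) ℂ))
      - ((c : ℂ) • (ITᵀ ⊗ₖ IR))).PosSemidef ↔
    (P * SQ⁻¹ * Pᴴ - ((lmax hM : ℝ) : ℂ) • IT).PosSemidef := by
  simpa only [inv_kronecker, ← transpose_nonsing_inv, ← hITeq] using!
    have : Nonempty (Fin nR) := ⟨⟨0, hnR⟩⟩
    stmt5_general SQ⁻¹ hSR hIT RR⁻¹ IR c P hM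
end

section
/- Let n ≥ 1 and let D ∈ ℝ^{n×n} be a diagonal matrix with diagonal entries d_{1,1} > d_{2,2} > … > d_{n,n} > 0. If U ∈ ℂ^{n×n} is a unitary matrix such that the diagonal of U D U^H equals (d_{1,1}, …, d_{n,n}), i.e. (U D U^H)_{i,i} = d_{i,i} for every i, then U is diagonal with unimodular diagonal entries, i.e. U_{i,j} = 0 for i ≠ j and |U_{i,i}| = 1 for all i; consequently U D U^H = D. (Lemma 1.) -/
open Matrix Finset

/-!
The Frobenius norm is unitarily invariant, so `A = U D Uᴴ` satisfies `tr (Aᴴ A) = tr (Dᴴ D)`. When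
`A` also has the diagonal of `D`, all of its Frobenius norm already sits on the diagonal, which
forces `A = D`. Then `U` commutes with a diagonal matrix with distinct entries, hence is diagonal.
-/

section FrobeniusNorm

variable {m n p q R : Type*} [Fintype m] [Fintype n]

theorem trace_conjTranspose_mul_self_isometry_mul_coisometry [Fintype p] [Fintype q]
    [DecidableEq n] [DecidableEq p] [CommSemiring R] [StarRing R] {U : Matrix m n R}
    {V : Matrix p q R} (hU : Uᴴ * U = 1) (hV : V * Vᴴ = 1) (A : Matrix n p R) :
    trace ((U * A * V)ᴴ * (U * A * V)) = trace (Aᴴ * A) := by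
  calc
    trace ((U * A * V)ᴴ * (U * A * V)) = trace (Vᴴ * (Aᴴ * (Uᴴ * U) * A) * V) := by
      simp only [conjTranspose_mul, Matrix.mul_assoc]
    _ = trace (V * Vᴴ * (Aᴴ * A)) := by rw [hU, Matrix.mul_one, trace_mul_cycle]
    _ = trace (Aᴴ * A) := by rw [hV, Matrix.one_mul]

theorem trace_diagonal_mul [DecidableEq n] [NonUnitalNonAssocSemiring R] (d : n → R)
    (A : Matrix n n R) : trace (diagonal d * A) = d ⬝ᵥ A.diag := by
  simp only [trace, diag_apply, diagonal_mul, dotProduct]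

theorem eq_diagonal_of_trace_conjTranspose_mul_self_eq [DecidableEq n] [NonUnitalRing R]
    [PartialOrder R] [StarRing R] [StarOrderedRing R] [NoZeroDivisors R] {A : Matrix n n R}
    {d : n → R} (hdiag : A.diag = d)
    (htrace : trace (Aᴴ * A) = trace ((diagonal d)ᴴ * diagonal d)) : A = diagonal d := by
  have hDA : trace ((diagonal d)ᴴ * A) = trace ((diagonal d)ᴴ * diagonal d) := by
    rw [diagonal_conjTranspose, trace_diagonal_mul, trace_diagonal_mul, hdiag, diag_diagonal]
  have hAD : trace (Aᴴ * diagonal d) = trace ((diagonal d)ᴴ * diagonal d) := by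
    simpa only [← trace_conjTranspose, conjTranspose_mul, conjTranspose_conjTranspose]
      using congrArg star hDA
  rw [← sub_eq_zero, ← trace_conjTranspose_mul_self_eq_zero_iff]
  simp only [conjTranspose_sub, Matrix.sub_mul, Matrix.mul_sub, trace_sub, htrace, hDA, hAD,
    sub_self]

theorem unitary_conj_diagonal_eq_of_diag_eq [DecidableEq n] [CommRing R] [PartialOrder R]
    [StarRing R] [StarOrderedRing R] [NoZeroDivisors R] {U : Matrix n n R}
    (hU : U ∈ unitaryGroup n R) {d : n → R} (hdiag : (U * diagonal d * Uᴴ).diag = d) :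
    U * diagonal d * Uᴴ = diagonal d := by
  have hUU : Uᴴ * U = 1 := mem_unitaryGroup_iff'.1 hU
  have hUU' : Uᴴ * Uᴴᴴ = 1 := by rwa [conjTranspose_conjTranspose]
  exact eq_diagonal_of_trace_conjTranspose_mul_self_eq hdiag
    (trace_conjTranspose_mul_self_isometry_mul_coisometry hUU hUU' _)

end FrobeniusNorm

section DiagonalMatrices

variable {n R : Type*} [Fintype n] [DecidableEq n]

theorem isDiag_of_commute_diagonal [CommRing R] [NoZeroDivisors R] {A : Matrix n n R} {d : n → R}
    (hd : d.Injective) (h : Commute A (diagonal d)) : A.IsDiag := by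
  intro i j hij
  have hentry : A i j * d j = d i * A i j := by
    simpa only [mul_diagonal, diagonal_mul] using congrFun₂ h.eq i j
  have hmul : (d i - d j) * A i j = 0 := by linear_combination -hentry
  exact (mul_eq_zero.1 hmul).resolve_left (sub_ne_zero.2 (hd.ne hij))

theorem apply_self_mem_unitary_of_isDiag [CommRing R] [StarRing R] {U : Matrix n n R}
    (hU : U ∈ unitaryGroup n R) (hdiag : U.IsDiag) (i : n) : U i i ∈ unitary R := by
  rw [Unitary.mem_iff_self_mul_star]
  have hUU : U * Uᴴ = 1 := mem_unitaryGroup_iff.1 hU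
  rw [← hdiag.diagonal_diag, diagonal_conjTranspose, diagonal_mul_diagonal, diagonal_eq_one] at hUU
  exact congrFun hUU i

end DiagonalMatrices

open scoped ComplexOrder in
theorem stmt7_general {n 𝕜 : Type*} [Fintype n] [DecidableEq n] [RCLike 𝕜] {d : n → 𝕜}
    (hd : d.Injective) {U : Matrix n n 𝕜} (hU : U ∈ unitaryGroup n 𝕜)
    (hdiag : ∀ i, (U * diagonal d * Uᴴ) i i = d i) :
    (∀ i j, i ≠ j → U i j = 0) ∧ (∀ i, ‖U i i‖ = 1) ∧ U * diagonal d * Uᴴ = diagonal d := by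
  have hconj : U * diagonal d * Uᴴ = diagonal d :=
    unitary_conj_diagonal_eq_of_diag_eq hU (funext hdiag)
  have hcomm : Commute U (diagonal d) := (commute_unitary_iff_star_right_conjugate hU).2 hconj
  have hUdiag : U.IsDiag := isDiag_of_commute_diagonal hd hcomm
  have hnorm (i : n) : ‖U i i‖ = 1 :=
    CStarRing.norm_of_mem_unitary (apply_self_mem_unitary_of_isDiag hU hUdiag i)
  exact ⟨fun _ _ hij ↦ hUdiag hij, hnorm, hconj⟩

/-- Lemma 1: if `U` is unitary and `U D Uᴴ` has the same diagonal `(d_1, …, d_n)` as the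
diagonal matrix `D` with strictly decreasing positive diagonal, then `U` is diagonal with
unimodular diagonal entries, and consequently `U D Uᴴ = D`. -/
theorem stmt7 (n : ℕ) (hn : 1 ≤ n) (d : Fin n → ℝ) (hd : StrictAnti d)
    (hdpos : ∀ i, 0 < d i)
    (U : Matrix (Fin n) (Fin n) ℂ) (hU : U ∈ Matrix.unitaryGroup (Fin n) ℂ)
    (hdiag : ∀ i, (U * Matrix.diagonal (fun k => (d k : ℂ)) * Uᴴ) i i = (d i : ℂ)) :
    (∀ i j, i ≠ j → U i j = 0) ∧ (∀ i, ‖U i i‖ = 1) ∧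
    U * Matrix.diagonal (fun k => (d k : ℂ)) * Uᴴ =
      Matrix.diagonal (fun k => (d k : ℂ)) := by
  exact stmt7_general (Complex.ofReal_injective.comp hd.injective) hU hdiag
end

section
/- Let N ≥ n ≥ 1 be integers and let d_1 > d_2 > … > d_N > 0 be real numbers; set D = diag(d_1, …, d_N) ∈ ℝ^{N×N} and D̃ = diag(d_1, …, d_n) ∈ ℝ^{n×n}. Let U ∈ ℂ^{N×n} satisfy U^H U = I_n, and suppose the matrix V = D U D̃^{-1} ∈ ℂ^{N×n} (i.e. V_{i,j} = (d_i/d_j) U_{i,j}) also satisfies V^H V = I_n. Then U_{i,j} = 0 whenever i ≠ j, and |U_{j,j}| = 1 for j = 1, …, n; that is, U consists of an n×n diagonal matrix with unimodular diagonal entries stacked on top of an (N−n)×n zero block. (Lemma 2.) -/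
open Matrix Finset

/-!
Let row `f j` hold the diagonal entry of column `j`, and write `w i = ‖d i‖ ^ 2`. Normalization of
column `j` of `V` says that the average of `w` with respect to the probability weights
`‖U i j‖ ^ 2` is `w (f j)`. Inductively, each earlier column of `U` is concentrated in its diagonal
entry, so orthogonality to it kills the entries of column `j` above the diagonal. The average then
only involves values at most `w (f j)`, the largest of them being attained on the diagonal alone,
so all the mass of column `j` sits there.
-/

theorem eq_zero_of_le_sum_mul {ι R : Type*} [Fintype ι] [Ring R] [LinearOrder R]
    [IsStrictOrderedRing R] {p w : ι → R} {c : R} (hp : ∀ i, 0 ≤ p i) (hp_sum : ∑ i, p i = 1)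
    (hw : ∀ i, p i ≠ 0 → w i ≤ c) (hc : c ≤ ∑ i, w i * p i) {i : ι} (hi : w i ≠ c) :
    p i = 0 := by
  have gap_nonneg : ∀ k ∈ univ, 0 ≤ (c - w k) * p k := fun k _ => by
    obtain hk | hk := eq_or_ne (p k) 0
    · simp [hk]
    · exact mul_nonneg (sub_nonneg.2 (hw k hk)) (hp k)
  have gap_sum : ∑ k, (c - w k) * p k = c - ∑ k, w k * p k := by
    simp only [sub_mul, sum_sub_distrib, ← mul_sum, hp_sum, mul_one]
  have gap_sum_eq_zero : ∑ k, (c - w k) * p k = 0 :=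
    (gap_sum.trans_le (sub_nonpos.2 hc)).antisymm (sum_nonneg gap_nonneg)
  have gap_eq_zero := (sum_eq_zero_iff_of_nonneg gap_nonneg).1 gap_sum_eq_zero i (mem_univ i)
  exact (mul_eq_zero.1 gap_eq_zero).resolve_left (sub_ne_zero.2 hi.symm)

theorem eq_zero_of_conjTranspose_mul_apply_eq_zero {ι κ R : Type*} [Fintype ι]
    [NonUnitalSemiring R] [NoZeroDivisors R] [StarRing R] {U : Matrix ι κ R} {i : ι} {j k : κ}
    (h_orth : (Uᴴ * U) k j = 0) (h_col : ∀ l, l ≠ i → U l k = 0) (h_ne : U i k ≠ 0) :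
    U i j = 0 := by
  have h_prod : star (U i k) * U i j = 0 := by
    rwa [mul_apply, Fintype.sum_eq_single i fun l hl => by simp [h_col l hl]] at h_orth
  exact (mul_eq_zero.1 h_prod).resolve_left (star_ne_zero.2 h_ne)

section RCLike

variable {𝕜 ι κ : Type*} [RCLike 𝕜] [Fintype ι] [DecidableEq κ] {U : Matrix ι κ 𝕜}

theorem sum_norm_sq_col_eq_one (hU : Uᴴ * U = 1) (j : κ) : ∑ i, ‖U i j‖ ^ 2 = 1 := by
  have h : (Uᴴ * U) j j = 1 := by rw [hU, one_apply_eq]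
  simp only [mul_apply, conjTranspose_apply, RCLike.star_def, RCLike.conj_mul] at h
  exact_mod_cast h

theorem norm_eq_one_of_col_eq_zero (hU : Uᴴ * U = 1) {i : ι} {j : κ}
    (h_col : ∀ l, l ≠ i → U l j = 0) : ‖U i j‖ = 1 := by
  have h := sum_norm_sq_col_eq_one hU j
  rw [Fintype.sum_eq_single i fun l hl => by simp [h_col l hl]] at h
  exact (pow_eq_one_iff_of_nonneg (norm_nonneg _) two_ne_zero).1 h

variable [LinearOrder ι] {f : κ → ι}

theorem eq_zero_of_le_sum_mul_norm_sq (hf : IsLowerSet (Set.range f)) {w : ι → ℝ}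
    (hw : StrictAnti w) (hU : Uᴴ * U = 1) (h_avg : ∀ j, w (f j) ≤ ∑ i, w i * ‖U i j‖ ^ 2)
    {i : ι} {j : κ} (hij : i ≠ f j) : U i j = 0 := by
  induction hm : f j using WellFoundedLT.induction generalizing i j with
  | ind m ih =>
    subst hm
    have above_diag : ∀ l < f j, U l j = 0 := fun l hl => by
      obtain ⟨k, rfl⟩ := hf hl.le ⟨j, rfl⟩
      have hkj : k ≠ j := fun h => hl.ne (congrArg f h)
      have h_col : ∀ l, l ≠ f k → U l k = 0 := fun l hlk => ih (f k) hl hlk rfl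
      have h_ne : U (f k) k ≠ 0 := norm_ne_zero_iff.1 <| by
        rw [norm_eq_one_of_col_eq_zero hU h_col]
        exact one_ne_zero
      exact eq_zero_of_conjTranspose_mul_apply_eq_zero (by rw [hU, one_apply_ne hkj]) h_col h_ne
    have w_le : ∀ l, ‖U l j‖ ^ 2 ≠ 0 → w l ≤ w (f j) := fun l hl =>
      hw.antitone <| not_lt.1 fun hlt => hl (by simp [above_diag l hlt])
    have h_sq : ‖U i j‖ ^ 2 = 0 :=
      eq_zero_of_le_sum_mul (fun l => sq_nonneg ‖U l j‖) (sum_norm_sq_col_eq_one hU j) w_le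
        (h_avg j) (hw.injective.ne hij)
    exact norm_eq_zero.1 (pow_eq_zero_iff two_ne_zero |>.1 h_sq)

theorem stmt8_general (hf : IsLowerSet (Set.range f)) {d : ι → 𝕜}
    (hd : StrictAnti fun i => ‖d i‖) (hd_ne : ∀ j, d (f j) ≠ 0) (hU : Uᴴ * U = 1)
    {V : Matrix ι κ 𝕜} (hV : ∀ i j, V i j = d i / d (f j) * U i j)
    (hV_norm : ∀ j, 1 ≤ ∑ i, ‖V i j‖ ^ 2) :
    (∀ i j, i ≠ f j → U i j = 0) ∧ ∀ j, ‖U (f j) j‖ = 1 := by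
  have hw : StrictAnti fun i => ‖d i‖ ^ 2 := fun _ _ h =>
    pow_lt_pow_left₀ (hd h) (norm_nonneg _) two_ne_zero
  have h_avg : ∀ j, ‖d (f j)‖ ^ 2 ≤ ∑ i, ‖d i‖ ^ 2 * ‖U i j‖ ^ 2 := fun j => calc
    ‖d (f j)‖ ^ 2 ≤ ‖d (f j)‖ ^ 2 * ∑ i, ‖V i j‖ ^ 2 :=
      le_mul_of_one_le_right (sq_nonneg _) (hV_norm j)
    _ = ∑ i, ‖d i‖ ^ 2 * ‖U i j‖ ^ 2 := by
      have h_ne : ‖d (f j)‖ ≠ 0 := norm_ne_zero_iff.2 (hd_ne j)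
      rw [mul_sum]
      refine sum_congr rfl fun i _ => ?_
      rw [hV, norm_mul, norm_div]
      field_simp
  have h_off : ∀ i j, i ≠ f j → U i j = 0 := fun _ _ =>
    eq_zero_of_le_sum_mul_norm_sq hf hw hU h_avg
  exact ⟨h_off, fun j => norm_eq_one_of_col_eq_zero hU fun i => h_off i j⟩

end RCLike

theorem isLowerSet_range_castLE {n N : ℕ} (h : n ≤ N) :
    IsLowerSet (Set.range (Fin.castLE h)) := by
  rw [Fin.range_castLE]
  exact fun _ _ hle hlt => (Fin.le_def.1 hle).trans_lt hlt

/-- Lemma 2: let `d_1 > … > d_N > 0`, let `U ∈ ℂ^{N×n}` have orthonormal columns, and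
suppose `V = D U D̃⁻¹` (i.e. `V_{ij} = (d_i/d_j) U_{ij}`) also has orthonormal columns.
Then `U` consists of an `n×n` diagonal matrix with unimodular diagonal entries stacked on
top of a zero block. -/
theorem stmt8 (N n : ℕ) (hn : 1 ≤ n) (hnN : n ≤ N)
    (d : Fin N → ℝ) (hd : StrictAnti d) (hdpos : ∀ i, 0 < d i)
    (U : Matrix (Fin N) (Fin n) ℂ) (hU : Uᴴ * U = 1)
    (V : Matrix (Fin N) (Fin n) ℂ)
    (hV : ∀ (i : Fin N) (j : Fin n),
      V i j = ((d i / d (Fin.castLE hnN j) : ℝ) : ℂ) * U i j)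
    (hVunit : Vᴴ * V = 1) :
    (∀ (i : Fin N) (j : Fin n), (i : ℕ) ≠ (j : ℕ) → U i j = 0) ∧
    (∀ j : Fin n, ‖U (Fin.castLE hnN j) j‖ = 1) := by
  have h := stmt8_general (d := fun i => (d i : ℂ)) (isLowerSet_range_castLE hnN)
    (by simpa only [Complex.norm_of_nonneg (hdpos _).le] using hd)
    (fun _ => Complex.ofReal_ne_zero.2 (hdpos _).ne') hU
    (fun i j => by rw [hV, Complex.ofReal_div]) fun j => (sum_norm_sq_col_eq_one hVunit j).ge
  exact ⟨fun i j hij => h.1 i j fun e => hij (congrArg Fin.val e), h.2⟩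
end

section
/- Let A, B ∈ ℂ^{n×n} be Hermitian matrices. Let a_1 ≥ a_2 ≥ … ≥ a_n be the eigenvalues of A arranged in descending order and let b_1 ≤ b_2 ≤ … ≤ b_n be the eigenvalues of B arranged in ascending order. Then the (real) trace of the product satisfies tr(A B) ≥ Σ_{i=1}^n a_i b_i. (Lemma 3, inequality part.) -/
open Matrix Finset

/-! Diagonalise `A` and `B` by unitaries `U` and `V`. Then `tr (A B) = ∑ i j, aᵢ |Wᵢⱼ|² bⱼ` with
`W = Uᴴ V`, and the matrix of the `|Wᵢⱼ|²` is doubly stochastic. A linear function on the doubly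
stochastic matrices is bounded below by its values at permutation matrices (Birkhoff), and there the
claim is the rearrangement inequality. -/

section DoublyStochastic

variable {n : Type*} [Fintype n] [DecidableEq n]

lemma dotProduct_le_dotProduct_mulVec_of_antivary {R : Type*} [Field R] [LinearOrder R]
    [IsStrictOrderedRing R] {a b : n → R} (hab : Antivary a b) {M : Matrix n n R}
    (hM : M ∈ doublyStochastic R n) : a ⬝ᵥ b ≤ a ⬝ᵥ M *ᵥ b := by
  have hlin : IsLinearMap R fun N : Matrix n n R => a ⬝ᵥ N *ᵥ b :=
    ⟨fun N N' => by rw [add_mulVec, dotProduct_add],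
      fun c N => by rw [smul_mulVec, dotProduct_smul]⟩
  have hperm : {σ.permMatrix R | σ : Equiv.Perm n} ⊆ {N | a ⬝ᵥ b ≤ a ⬝ᵥ N *ᵥ b} := by
    rintro _ ⟨σ, rfl⟩
    rw [Set.mem_ofPred_eq, permMatrix_mulVec]
    exact hab.sum_mul_le_sum_mul_comp_perm
  rw [← SetLike.mem_coe, doublyStochastic_eq_convexHull_permMatrix] at hM
  exact convexHull_min hperm (convex_halfSpace_ge hlin _) hM

lemma sum_norm_sq_row_of_mem_unitaryGroup {𝕜 : Type*} [RCLike 𝕜] {U : Matrix n n 𝕜}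
    (hU : U ∈ unitaryGroup n 𝕜) (i : n) : ∑ j, ‖U i j‖ ^ 2 = 1 := by
  have hdiag : (U * star U) i i = 1 := by rw [mem_unitaryGroup_iff.1 hU, one_apply_eq]
  simp only [mul_apply, star_apply, RCLike.star_def, RCLike.mul_conj] at hdiag
  exact_mod_cast hdiag

lemma map_norm_sq_mem_doublyStochastic {𝕜 : Type*} [RCLike 𝕜] {U : Matrix n n 𝕜}
    (hU : U ∈ unitaryGroup n 𝕜) : U.map (‖·‖ ^ 2) ∈ doublyStochastic ℝ n := by
  refine mem_doublyStochastic_iff_sum.2 ⟨fun i j => sq_nonneg _,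
    sum_norm_sq_row_of_mem_unitaryGroup hU, fun j => ?_⟩
  simpa only [star_apply, norm_star, map_apply] using
    sum_norm_sq_row_of_mem_unitaryGroup (Unitary.star_mem hU) j

end DoublyStochastic

section Trace

lemma trace_conjStarAlgAut_mul_conjStarAlgAut {R n : Type*} [CommRing R] [StarRing R] [Fintype n]
    [DecidableEq n] (U V : unitaryGroup n R) (D E : Matrix n n R) :
    (Unitary.conjStarAlgAut R _ U D * Unitary.conjStarAlgAut R _ V E).trace =
      (D * (star U * V : unitaryGroup n R) * E *
        star ((star U * V : unitaryGroup n R) : Matrix n n R)).trace := by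
  simp only [Unitary.conjStarAlgAut_apply, Submonoid.coe_mul, Unitary.coe_star, star_mul, star_star,
    Matrix.mul_assoc]
  rw [trace_mul_comm]
  simp only [Matrix.mul_assoc]

variable {𝕜 m n : Type*} [RCLike 𝕜] [Fintype m] [DecidableEq m] [Fintype n] [DecidableEq n]

lemma trace_diagonal_mul_mul_diagonal_mul_conjTranspose (a : m → ℝ) (b : n → ℝ)
    (W : Matrix m n 𝕜) :
    (diagonal (RCLike.ofReal ∘ a : m → 𝕜) * W * diagonal (RCLike.ofReal ∘ b : n → 𝕜) * Wᴴ).trace =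
      ((a ⬝ᵥ W.map (‖·‖ ^ 2) *ᵥ b : ℝ) : 𝕜) := by
  simp only [trace, diag_apply, mul_apply (N := Wᴴ), mul_diagonal, diagonal_mul,
    conjTranspose_apply, dotProduct, mulVec, map_apply, mul_sum, Function.comp_apply]
  push_cast
  refine sum_congr rfl fun i _ => sum_congr rfl fun j _ => ?_
  rw [← RCLike.mul_conj, RCLike.star_def]
  ring

lemma exists_mem_unitaryGroup_trace_mul_eq_dotProduct {A B : Matrix n n 𝕜}
    (hA : A.IsHermitian) (hB : B.IsHermitian) :
    ∃ W ∈ unitaryGroup n 𝕜, (A * B).trace =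
      ((hA.eigenvalues ⬝ᵥ W.map (‖·‖ ^ 2) *ᵥ hB.eigenvalues : ℝ) : 𝕜) := by
  refine ⟨_, (star hA.eigenvectorUnitary * hB.eigenvectorUnitary).2, ?_⟩
  rw [← trace_diagonal_mul_mul_diagonal_mul_conjTranspose, ← star_eq_conjTranspose,
    ← trace_conjStarAlgAut_mul_conjStarAlgAut, ← hA.spectral_theorem, ← hB.spectral_theorem]

theorem stmt9_general {ι : Type*} [Fintype ι] {A B : Matrix n n 𝕜}
    (hA : A.IsHermitian) (hB : B.IsHermitian) (σ τ : ι ≃ n)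
    (h : Antivary (hA.eigenvalues ∘ σ) (hB.eigenvalues ∘ τ)) :
    ∑ i, hA.eigenvalues (σ i) * hB.eigenvalues (τ i) ≤ RCLike.re (A * B).trace := by
  classical
  obtain ⟨W, hW, htrace⟩ := exists_mem_unitaryGroup_trace_mul_eq_dotProduct hA hB
  set M := W.map (‖·‖ ^ 2)
  have hM : M.submatrix σ τ ∈ doublyStochastic ℝ ι :=
    reindex_mem_doublyStochastic (e₁ := σ.symm) (e₂ := τ.symm) (map_norm_sq_mem_doublyStochastic hW)
  calc ∑ i, hA.eigenvalues (σ i) * hB.eigenvalues (τ i)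
      ≤ (hA.eigenvalues ∘ σ) ⬝ᵥ M.submatrix σ τ *ᵥ (hB.eigenvalues ∘ τ) :=
        dotProduct_le_dotProduct_mulVec_of_antivary h hM
    _ = hA.eigenvalues ⬝ᵥ M *ᵥ hB.eigenvalues := by
        rw [submatrix_mulVec_equiv, comp_equiv_dotProduct_comp_equiv, Function.comp_assoc,
          Equiv.self_comp_symm, Function.comp_id]
    _ = RCLike.re (A * B).trace := by rw [htrace, RCLike.ofReal_re]

end Trace

/-- Lemma 3 (inequality part): for Hermitian `A`, `B` with eigenvalues `a` arranged in
descending order and `b` arranged in ascending order, `tr(A B) ≥ Σ_i a_i b_i`. -/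
theorem stmt9 (n : ℕ) (A B : Matrix (Fin n) (Fin n) ℂ)
    (hA : A.IsHermitian) (hB : B.IsHermitian)
    (a b : Fin n → ℝ) (ha : Antitone a) (hb : Monotone b)
    (σ : Equiv.Perm (Fin n)) (hσ : ∀ i, a i = hA.eigenvalues (σ i))
    (τ : Equiv.Perm (Fin n)) (hτ : ∀ i, b i = hB.eigenvalues (τ i)) :
    ∑ i, a i * b i ≤ ((A * B).trace).re := by
  obtain ⟨rfl, rfl⟩ : a = hA.eigenvalues ∘ σ ∧ b = hB.eigenvalues ∘ τ := ⟨funext hσ, funext hτ⟩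
  exact stmt9_general hA hB σ τ (ha.antivary hb)
end

section
/- Let A, B ∈ ℂ^{n×n} be Hermitian matrices and suppose B = diag(b_1, …, b_n) is diagonal with distinct real entries b_1 < b_2 < … < b_n, and suppose A has distinct eigenvalues a_1 > a_2 > … > a_n. Then tr(A B) = Σ_{i=1}^n a_i b_i if and only if A = diag(a_1, …, a_n). (Lemma 3, equality characterization.) -/
open Matrix Finset

/-!
Write `A = U diag(a) U*` with `U` unitary. Then `tr(A diag(b)) = ⟨S a, b⟩`, where `S` has entries
`‖U i j‖ ^ 2` and is doubly stochastic. By Birkhoff's theorem `S` is an average of permutations,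
and by the rearrangement inequality each permutation `π` in it gives `⟨a ∘ π, b⟩ ≥ ⟨a, b⟩`. If the
trace attains this minimum, all of them do, which forces `a ∘ π = a`; hence `U i j ≠ 0` only when
`a i = a j`. This says that `U` commutes with `diag(a)`, so that `A = diag(a)`.
-/

section Rearrangement

lemma monovary_of_antivary_of_injective {ι α β γ : Type*} [Preorder α] [LinearOrder β]
    [LinearOrder γ] {f : ι → α} {g : ι → β} {b : ι → γ} (hb : b.Injective)
    (hf : Antivary f b) (hg : Antivary g b) : Monovary f g := by
  intro i j hij
  have hle : b j ≤ b i := not_lt.1 fun h => (hg h).not_gt hij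
  exact hf (hle.lt_of_ne (hb.ne fun h => hij.ne (congrArg g h.symm)))

variable {R n : Type*} [CommRing R] [LinearOrder R] [IsStrictOrderedRing R]

-- `∑ (a i - a (π i)) ^ 2 = 2 * (∑ a i * a i - ∑ a i * a (π i))`, and the rearrangement
-- inequality for the monovarying pair `a`, `a ∘ π` makes the right-hand side nonpositive.
lemma comp_perm_eq_of_monovary [Finite n] {a : n → R} {π : Equiv.Perm n} (h : Monovary a (a ∘ π)) :
    a ∘ π = a := by
  cases nonempty_fintype n
  have hle : ∑ i, a i * a i ≤ ∑ i, a i * a (π i) := by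
    simpa using h.sum_mul_comp_perm_le_sum_mul (σ := π⁻¹)
  have hperm : ∑ i, a (π i) * a (π i) = ∑ i, a i * a i := Equiv.sum_comp π fun i => a i * a i
  have hsq : ∑ i, (a i - a (π i)) ^ 2 ≤ 0 := calc
    ∑ i, (a i - a (π i)) ^ 2
      = ∑ i, (a i * a i + a (π i) * a (π i) - 2 * (a i * a (π i))) :=
        sum_congr rfl fun i _ => by ring
    _ = ∑ i, a i * a i + ∑ i, a (π i) * a (π i) - 2 * ∑ i, a i * a (π i) := by
        rw [sum_sub_distrib, sum_add_distrib, mul_sum]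
    _ ≤ 0 := by linarith
  funext i
  have hzero := (sum_eq_zero_iff_of_nonneg fun i _ => sq_nonneg (a i - a (π i))).1
    (hsq.antisymm (sum_nonneg fun i _ => sq_nonneg _)) i (mem_univ i)
  exact (sub_eq_zero.1 ((pow_eq_zero_iff two_ne_zero).1 hzero)).symm

lemma comp_perm_dotProduct_eq_iff [Fintype n] {a b : n → R} (hb : b.Injective) (hab : Antivary a b)
    {π : Equiv.Perm n} : (a ∘ π) ⬝ᵥ b = a ⬝ᵥ b ↔ a ∘ π = a := by
  refine ⟨fun h => ?_, fun h => by rw [h]⟩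
  have hπ : Antivary (a ∘ π) b := hab.sum_comp_perm_mul_eq_sum_mul_iff.1 h
  exact comp_perm_eq_of_monovary (monovary_of_antivary_of_injective hb hab hπ)

end Rearrangement

section DoublyStochastic

variable {R n : Type*} [Field R] [LinearOrder R] [IsStrictOrderedRing R] [Fintype n]
  [DecidableEq n]

lemma eq_of_mulVec_dotProduct_eq_of_mem_doublyStochastic {S : Matrix n n R}
    (hS : S ∈ doublyStochastic R n) {a b : n → R} (hb : b.Injective) (hab : Antivary a b)
    (h : S *ᵥ a ⬝ᵥ b = a ⬝ᵥ b) {i j : n} (hij : S i j ≠ 0) : a i = a j := by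
  obtain ⟨w, hw_nonneg, hw_sum, rfl⟩ := exists_eq_sum_perm_of_mem_doublyStochastic hS
  have havg : ∑ π, w π * (a ⬝ᵥ b) = ∑ π, w π * ((a ∘ π) ⬝ᵥ b) := by
    rw [← sum_mul, hw_sum, one_mul, ← h, sum_mulVec, sum_dotProduct]
    simp only [smul_mulVec, permMatrix_mulVec, smul_dotProduct, smul_eq_mul]
  have hmin (π : Equiv.Perm n) : w π * (a ⬝ᵥ b) ≤ w π * ((a ∘ π) ⬝ᵥ b) :=
    mul_le_mul_of_nonneg_left hab.sum_mul_le_sum_comp_perm_mul (hw_nonneg π)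
  obtain ⟨π, -, hπ⟩ := exists_ne_zero_of_sum_ne_zero (by rwa [Matrix.sum_apply] at hij)
  obtain ⟨hwπ, rfl⟩ : w π ≠ 0 ∧ π i = j := by
    simpa [PEquiv.toMatrix_apply, and_comm, eq_comm] using hπ
  have hattained : (a ∘ π) ⬝ᵥ b = a ⬝ᵥ b :=
    (mul_left_cancel₀ hwπ
      ((sum_eq_sum_iff_of_le fun π _ => hmin π).1 havg π (mem_univ π))).symm
  exact (congrFun ((comp_perm_dotProduct_eq_iff hb hab).1 hattained) i).symm

end DoublyStochastic

section Unitary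

variable {𝕜 n : Type*} [RCLike 𝕜]

/-- The matrix of squared absolute values of the entries of `U`; for unitary `U` it is the
unistochastic matrix through which the eigenvalues of `U diag(a) U*` determine its diagonal. -/
def normSqMatrix (U : Matrix n n 𝕜) : Matrix n n ℝ :=
  U.map fun z => ‖z‖ ^ 2

variable [Fintype n] [DecidableEq n]

lemma normSqMatrix_mem_doublyStochastic {U : Matrix n n 𝕜} (hU : U ∈ unitaryGroup n 𝕜) :
    normSqMatrix U ∈ doublyStochastic ℝ n := by
  refine mem_doublyStochastic_iff_sum.2 ⟨fun i j => sq_nonneg _, fun i => ?_, fun j => ?_⟩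
  · have hrow : (U * star U) i i = 1 := by rw [mem_unitaryGroup_iff.1 hU, one_apply_eq]
    simp only [mul_apply, star_apply, RCLike.star_def, RCLike.mul_conj] at hrow
    exact_mod_cast hrow
  · have hcol : (star U * U) j j = 1 := by rw [mem_unitaryGroup_iff'.1 hU, one_apply_eq]
    simp only [mul_apply, star_apply, RCLike.star_def, RCLike.conj_mul] at hcol
    exact_mod_cast hcol

lemma mul_diagonal_mul_star_apply_self (U : Matrix n n 𝕜) (a : n → ℝ) (i : n) :
    (U * diagonal (fun j => (a j : 𝕜)) * star U) i i = ((normSqMatrix U *ᵥ a) i : ℝ) := by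
  simp only [mul_apply (M := U * _), mul_diagonal, star_apply, RCLike.star_def, mulVec,
    dotProduct, normSqMatrix, map_apply, RCLike.ofReal_sum, RCLike.ofReal_mul,
    RCLike.ofReal_pow, ← RCLike.mul_conj, mul_right_comm]

lemma trace_mul_diagonal_mul_star_mul_diagonal (U : Matrix n n 𝕜) (a b : n → ℝ) :
    (U * diagonal (fun i => (a i : 𝕜)) * star U * diagonal (fun i => (b i : 𝕜))).trace =
      ((normSqMatrix U *ᵥ a ⬝ᵥ b : ℝ) : 𝕜) := by
  simp only [trace, diag_apply, mul_diagonal, mul_diagonal_mul_star_apply_self, dotProduct,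
    RCLike.ofReal_sum, RCLike.ofReal_mul]

lemma mul_diagonal_mul_star_eq_diagonal {U : Matrix n n 𝕜} (hU : U ∈ unitaryGroup n 𝕜)
    {d : n → 𝕜} (h : ∀ i j, U i j ≠ 0 → d i = d j) :
    U * diagonal d * star U = diagonal d := by
  have hcomm : U * diagonal d = diagonal d * U := by
    ext i j
    rw [mul_diagonal, diagonal_mul, mul_comm]
    by_cases hij : U i j = 0
    · rw [hij, mul_zero, mul_zero]
    · rw [h i j hij]
  rw [hcomm, mul_assoc, mem_unitaryGroup_iff.1 hU, mul_one]

theorem trace_mul_diagonal_mul_star_mul_diagonal_eq_iff {U : Matrix n n 𝕜}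
    (hU : U ∈ unitaryGroup n 𝕜) {a b : n → ℝ} (hb : b.Injective) (hab : Antivary a b) :
    (U * diagonal (fun i => (a i : 𝕜)) * star U * diagonal (fun i => (b i : 𝕜))).trace =
        ((∑ i, a i * b i : ℝ) : 𝕜) ↔
      U * diagonal (fun i => (a i : 𝕜)) * star U = diagonal (fun i => (a i : 𝕜)) := by
  constructor
  · intro h
    rw [trace_mul_diagonal_mul_star_mul_diagonal, RCLike.ofReal_inj] at h
    refine mul_diagonal_mul_star_eq_diagonal hU fun i j hij => congrArg _ ?_
    have hS : normSqMatrix U i j ≠ 0 := pow_ne_zero 2 (norm_ne_zero_iff.2 hij)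
    exact eq_of_mulVec_dotProduct_eq_of_mem_doublyStochastic
      (normSqMatrix_mem_doublyStochastic hU) hb hab h hS
  · intro h
    simp only [h, diagonal_mul_diagonal, trace_diagonal, RCLike.ofReal_sum, RCLike.ofReal_mul]

lemma exists_unitary_eq_mul_diagonal_eigenvalues_mul_star {A : Matrix n n 𝕜}
    (hA : A.IsHermitian) (σ : Equiv.Perm n) :
    ∃ U ∈ unitaryGroup n 𝕜,
      A = U * diagonal (fun i => (hA.eigenvalues (σ i) : 𝕜)) * star U := by
  have hdiag : diagonal (fun i => (hA.eigenvalues (σ i) : 𝕜)) =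
      (diagonal fun i => (hA.eigenvalues i : 𝕜)).submatrix σ σ :=
    (submatrix_diagonal_equiv (fun i => (hA.eigenvalues i : 𝕜)) σ).symm
  have hspec : A = hA.eigenvectorUnitary * diagonal (fun i => (hA.eigenvalues i : 𝕜)) *
      star (hA.eigenvectorUnitary : Matrix n n 𝕜) := hA.spectral_theorem
  refine ⟨(hA.eigenvectorUnitary : Matrix n n 𝕜).submatrix id σ, ?_, ?_⟩
  · rw [mem_unitaryGroup_iff, star_eq_conjTranspose, conjTranspose_submatrix,
      submatrix_mul_equiv, submatrix_id_id]
    exact mem_unitaryGroup_iff.1 hA.eigenvectorUnitary.2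
  · rw [hdiag, star_eq_conjTranspose, conjTranspose_submatrix, submatrix_mul_equiv,
      submatrix_mul_equiv, submatrix_id_id, ← star_eq_conjTranspose, ← hspec]

theorem stmt10_general {A : Matrix n n 𝕜} (hA : A.IsHermitian) {a b : n → ℝ}
    (hb : b.Injective) (hab : Antivary a b) (σ : Equiv.Perm n)
    (hσ : ∀ i, a i = hA.eigenvalues (σ i)) :
    (A * diagonal (fun i => (b i : 𝕜))).trace = ((∑ i, a i * b i : ℝ) : 𝕜) ↔
      A = diagonal (fun i => (a i : 𝕜)) := by
  obtain ⟨U, hU, hAU⟩ := exists_unitary_eq_mul_diagonal_eigenvalues_mul_star hA σ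
  simp only [← hσ] at hAU
  rw [hAU]
  exact trace_mul_diagonal_mul_star_mul_diagonal_eq_iff hU hb hab

end Unitary

/-- Lemma 3 (equality characterization): if `B = diag(b_1, …, b_n)` with strictly
increasing real entries and the Hermitian matrix `A` has strictly decreasing (distinct)
eigenvalues `a_1 > … > a_n`, then `tr(A B) = Σ_i a_i b_i` iff `A = diag(a_1, …, a_n)`. -/
theorem stmt10 (n : ℕ) (A : Matrix (Fin n) (Fin n) ℂ) (hA : A.IsHermitian)
    (b : Fin n → ℝ) (hb : StrictMono b)
    (B : Matrix (Fin n) (Fin n) ℂ) (hBdef : B = Matrix.diagonal (fun i => (b i : ℂ)))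
    (a : Fin n → ℝ) (ha : StrictAnti a)
    (σ : Equiv.Perm (Fin n)) (hσ : ∀ i, a i = hA.eigenvalues (σ i)) :
    (A * B).trace = ((∑ i, a i * b i : ℝ) : ℂ) ↔
      A = Matrix.diagonal (fun i => (a i : ℂ)) := by
  subst hBdef
  exact stmt10_general hA hb.injective (ha.antitone.antivary hb.monotone) σ hσ
end

section
/- Let M, B ∈ ℂ^{n×n} be Hermitian with B positive semidefinite, and let C ∈ ℂ^{m×m} be Hermitian (m ≥ 1), with largest eigenvalue λ_max(C). Then M ⊗ I_m ⪰ B ⊗ C holds if and only if M ⪰ λ_max(C) B. (Lemma 4, matrix form: the set of matrices M satisfying the Kronecker inequality coincides with the set satisfying the reduced inequality.) -/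
open Matrix Finset
open scoped ComplexOrder Kronecker

/-! Conjugating by `1 ⊗ U`, where the unitary `U` diagonalizes `C`, turns `M ⊗ 1 - B ⊗ C` into the
block diagonal matrix with blocks `M - λ B`, one for each eigenvalue `λ` of `C`. Hence the Kronecker
inequality says that `M ⪰ λ B` for every eigenvalue `λ`, and since `B ⪰ 0` the largest eigenvalue
gives the strongest of these conditions. -/

section BlockDiagonal

variable {n o R : Type*} [DecidableEq o]

theorem blockDiagonal_mulVec_apply [Fintype n] [Fintype o] [NonUnitalNonAssocSemiring R]
    (A : o → Matrix n n R) (x : n × o → R) (i : n) (k : o) :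
    (blockDiagonal A *ᵥ x) (i, k) = (A k *ᵥ fun j ↦ x (j, k)) i := by
  simp [mulVec, dotProduct, blockDiagonal_apply, Fintype.sum_prod_type, ite_mul]

theorem dotProduct_blockDiagonal_mulVec [Fintype n] [Fintype o] [NonUnitalNonAssocSemiring R]
    (A : o → Matrix n n R) (y x : n × o → R) :
    y ⬝ᵥ blockDiagonal A *ᵥ x = ∑ k, (fun i ↦ y (i, k)) ⬝ᵥ A k *ᵥ fun j ↦ x (j, k) := by
  simp only [dotProduct, Fintype.sum_prod_type_right, blockDiagonal_mulVec_apply]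

theorem posSemidef_blockDiagonal_iff [Finite n] [Finite o] [Ring R] [PartialOrder R]
    [StarRing R] [AddLeftMono R] {A : o → Matrix n n R} :
    (blockDiagonal A).PosSemidef ↔ ∀ k, (A k).PosSemidef := by
  constructor
  · intro h k
    have hblock : (blockDiagonal A).submatrix (·, k) (·, k) = A k := by
      ext i j
      exact blockDiagonal_apply_eq A i j k
    exact hblock ▸ h.submatrix (·, k)
  · intro h
    have := Fintype.ofFinite n
    have := Fintype.ofFinite o
    refine .of_dotProduct_mulVec_nonneg
      (isHermitian_blockDiagonal_iff.mpr fun k ↦ (h k).isHermitian) fun x ↦ ?_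
    rw [dotProduct_blockDiagonal_mulVec]
    exact Finset.sum_nonneg fun k _ ↦ (h k).dotProduct_mulVec_nonneg fun i ↦ x (i, k)

end BlockDiagonal

section Kronecker

variable {n m R : Type*} [Finite n] [DecidableEq m]
  [CommRing R] [PartialOrder R] [StarRing R] {M B : Matrix n n R}

theorem posSemidef_kronecker_one_sub_kronecker_diagonal_iff [Finite m] [AddLeftMono R] {d : m → R} :
    (M ⊗ₖ (1 : Matrix m m R) - B ⊗ₖ diagonal d).PosSemidef ↔
      ∀ i, (M - d i • B).PosSemidef := by
  rw [kronecker_one, kronecker_diagonal, ← blockDiagonal_sub, posSemidef_blockDiagonal_iff]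
  simp only [Pi.sub_apply, op_smul_eq_smul]

theorem posSemidef_kronecker_one_sub_kronecker_star_conj_iff [Fintype m] {C U : Matrix m m R}
    (hU : U ∈ unitary (Matrix m m R)) :
    (M ⊗ₖ (1 : Matrix m m R) - B ⊗ₖ (star U * C * U)).PosSemidef ↔
      (M ⊗ₖ (1 : Matrix m m R) - B ⊗ₖ C).PosSemidef := by
  classical
  have := Fintype.ofFinite n
  set V : Matrix (n × m) (n × m) R := (1 : Matrix n n R) ⊗ₖ U
  have hV : IsUnit V :=
    Unitary.isUnit_coe (U := ⟨V, kronecker_mem_unitary (one_mem _) hU⟩)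
  have hconj (A : Matrix n n R) (D : Matrix m m R) :
      star V * (A ⊗ₖ D) * V = A ⊗ₖ (star U * D * U) := by
    simp only [V, star_eq_conjTranspose, conjTranspose_kronecker, conjTranspose_one,
      ← mul_kronecker_mul, Matrix.one_mul, Matrix.mul_one]
  rw [← hV.posSemidef_star_left_conjugate_iff (x := _ - B ⊗ₖ C), mul_sub, sub_mul, hconj, hconj,
    mul_one, Unitary.star_mul_self_of_mem hU]

end Kronecker

section Scalar

theorem posSemidef_sub_smul_of_le {n R : Type*} [CommRing R] [PartialOrder R] [StarRing R]
    [StarOrderedRing R] {M B : Matrix n n R} (hB : B.PosSemidef) {c d : R} (hcd : c ≤ d)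
    (h : (M - d • B).PosSemidef) : (M - c • B).PosSemidef := by
  have hsmul : ((d - c) • B).PosSemidef := hB.smul (sub_nonneg.mpr hcd)
  have hsplit : M - c • B = (M - d • B) + (d - c) • B := by module
  exact hsplit ▸ h.add hsmul

variable {n 𝕜 : Type*} [RCLike 𝕜] {M B : Matrix n n 𝕜}

theorem forall_posSemidef_sub_smul_iff_iSup {ι : Type*} [Finite ι] [Nonempty ι]
    (hB : B.PosSemidef) (f : ι → ℝ) :
    (∀ i, (M - (f i : 𝕜) • B).PosSemidef) ↔ (M - ((⨆ i, f i : ℝ) : 𝕜) • B).PosSemidef := by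
  constructor
  · intro h
    obtain ⟨i, hi⟩ := exists_eq_ciSup_of_finite (f := f)
    exact hi ▸ h i
  · intro h i
    have hle : f i ≤ ⨆ j, f j := le_ciSup (Set.finite_range f).bddAbove i
    exact posSemidef_sub_smul_of_le hB (RCLike.ofReal_le_ofReal.mpr hle) h

end Scalar

section Spectral

variable {n m 𝕜 : Type*} [RCLike 𝕜] [Finite n] [Fintype m] [DecidableEq m]
  {M B : Matrix n n 𝕜} {C : Matrix m m 𝕜}

theorem posSemidef_kronecker_one_sub_kronecker_iff_eigenvalues (hC : C.IsHermitian) :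
    (M ⊗ₖ (1 : Matrix m m 𝕜) - B ⊗ₖ C).PosSemidef ↔
      ∀ i, (M - (hC.eigenvalues i : 𝕜) • B).PosSemidef := by
  have hdiag := hC.conjStarAlgAut_star_eigenvectorUnitary
  rw [Unitary.conjStarAlgAut_star_apply] at hdiag
  rw [← posSemidef_kronecker_one_sub_kronecker_star_conj_iff hC.eigenvectorUnitary.2, hdiag,
    posSemidef_kronecker_one_sub_kronecker_diagonal_iff]
  rfl

theorem stmt11_general [Nonempty m] (hB : B.PosSemidef) (hC : C.IsHermitian) :
    (M ⊗ₖ (1 : Matrix m m 𝕜) - B ⊗ₖ C).PosSemidef ↔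
      (M - ((⨆ i, hC.eigenvalues i : ℝ) : 𝕜) • B).PosSemidef :=
  (posSemidef_kronecker_one_sub_kronecker_iff_eigenvalues hC).trans
    (forall_posSemidef_sub_smul_iff_iSup hB hC.eigenvalues)

end Spectral

/-- Lemma 4 (matrix form): for Hermitian `M`, positive semidefinite `B` and Hermitian `C`,
`M ⊗ I ⪰ B ⊗ C` holds iff `M ⪰ λ_max(C) B`. -/
theorem stmt11 (n m : ℕ) (hm : 1 ≤ m)
    (M B : Matrix (Fin n) (Fin n) ℂ) (hM : M.IsHermitian) (hB : B.PosSemidef)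
    (C : Matrix (Fin m) (Fin m) ℂ) (hC : C.IsHermitian) :
    (M ⊗ₖ (1 : Matrix (Fin m) (Fin m) ℂ) - B ⊗ₖ C).PosSemidef ↔
    (M - ((lmax hC : ℝ) : ℂ) • B).PosSemidef := by
  have : Nonempty (Fin m) := ⟨⟨0, hm⟩⟩
  exact stmt11_general hB hC
end

section
/- Let n ≥ 1, let γ_1 ≥ γ_2 ≥ … ≥ γ_n > 0 be positive reals, and let 𝒫 > 0. Define m_* as the largest m ∈ {1, …, n} such that (1/√γ_m) · Σ_{i=1}^m (1/√γ_i) − Σ_{i=1}^m (1/γ_i) < 𝒫 (the set of such m is nonempty since m = 1 gives 0 < 𝒫). Define κ*_j = ((𝒫 + Σ_{i=1}^{m_*} 1/γ_i) / (Σ_{i=1}^{m_*} 1/√γ_i)) · (1/√γ_j) − 1/γ_j for 1 ≤ j ≤ m_*, and κ*_j = 0 for m_* < j ≤ n. Then κ*_j ≥ 0 for all j, Σ_{j=1}^n κ*_j = 𝒫, and for every choice of nonnegative reals κ_1, …, κ_n with Σ_{j=1}^n κ_j ≤ 𝒫 one has Σ_{j=1}^n 1/(1 + γ_j κ_j) ≥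 Σ_{j=1}^n 1/(1 + γ_j κ*_j) = n − m_* + (Σ_{i=1}^{m_*} 1/√γ_i)² / (𝒫 + Σ_{i=1}^{m_*} 1/γ_i). (Water-filling solution of the scalar problem in the proof of Theorem 5.) -/
open Finset

/-!
Water-filling at level `L` gives a channel of gain `g` the power `max 0 (L / √g - 1 / g)`. At this
power the convex function `x ↦ 1 / (1 + g * x)` has slope `-1 / L ^ 2`, or the power is `0` and the
slope is at least `-1 / L ^ 2`. Summing the tangent-line inequalities, whose slopes are thus
comparable to a common Lagrange multiplier, shows that no allocation of the same total power does
better. The level spends exactly the budget `P` on the active channels `s` when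
`L * ∑ i ∈ s, 1 / √(γ i) = P + ∑ i ∈ s, 1 / γ i`. For sorted gains the activation threshold of a new
channel is the same whether or not that channel is counted among the active ones, so the largest
index meeting its threshold separates the channels lying below the water level from the others.
-/

theorem one_div_add_sub_div_sq_le_one_div {K : Type*} [Field K] [LinearOrder K]
    [IsStrictOrderedRing K] {u v : K} (hu : 0 < u) (hv : 0 < v) :
    1 / v + (v - u) / v ^ 2 ≤ 1 / u := by
  have gap : 1 / u - (1 / v + (v - u) / v ^ 2) = (u - v) ^ 2 / (u * v ^ 2) := by
    field_simp
    ring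
  exact sub_nonneg.mp (gap ▸ by positivity)

/-- The power that water-filling at level `L` allocates to a channel of gain `g`, which is active
when `1 / √g ≤ L`. -/
noncomputable def waterFilling (L g : ℝ) : ℝ :=
  max 0 (L / √g - 1 / g)

section Channel

variable {L g x : ℝ}

theorem waterFilling_nonneg (L g : ℝ) : 0 ≤ waterFilling L g :=
  le_max_left _ _

theorem waterFilling_of_le (hg : 0 < g) (hL : 1 / √g ≤ L) :
    waterFilling L g = L / √g - 1 / g := by
  refine max_eq_right (sub_nonneg.mpr ?_)
  calc 1 / g = 1 / √g / √g := by rw [div_div, Real.mul_self_sqrt hg.le]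
    _ ≤ L / √g := by gcongr

theorem waterFilling_of_ge (hg : 0 < g) (hL : L ≤ 1 / √g) : waterFilling L g = 0 := by
  refine max_eq_left (sub_nonpos.mpr ?_)
  calc L / √g ≤ 1 / √g / √g := by gcongr
    _ = 1 / g := by rw [div_div, Real.mul_self_sqrt hg.le]

theorem one_add_mul_waterFilling_of_le (hg : 0 < g) (hL : 1 / √g ≤ L) :
    1 + g * waterFilling L g = L * √g := by
  calc 1 + g * waterFilling L g = 1 + (L * (g / √g) - g / g) := by
        rw [waterFilling_of_le hg hL]
        ring
    _ = L * √g := by rw [Real.div_sqrt, div_self hg.ne', add_sub_cancel]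

theorem div_sq_mul_sub_waterFilling_le (hg : 0 < g) (hL : 0 < L) (hx : 0 ≤ x) :
    g / (1 + g * waterFilling L g) ^ 2 * (x - waterFilling L g) ≤
      (x - waterFilling L g) / L ^ 2 := by
  rcases le_total (1 / √g) L with active | inactive
  · refine le_of_eq ?_
    rw [one_add_mul_waterFilling_of_le hg active, mul_pow, Real.sq_sqrt hg.le]
    field_simp
  · have slope_le : g ≤ 1 / L ^ 2 := by
      calc g = √g ^ 2 := (Real.sq_sqrt hg.le).symm
        _ ≤ (1 / L) ^ 2 := by
          gcongr
          exact (le_one_div hL (Real.sqrt_pos.mpr hg)).mp inactive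
        _ = 1 / L ^ 2 := one_div_pow L 2
    calc g / (1 + g * waterFilling L g) ^ 2 * (x - waterFilling L g) = g * x := by
          simp [waterFilling_of_ge hg inactive]
      _ ≤ 1 / L ^ 2 * x := by gcongr
      _ = (x - waterFilling L g) / L ^ 2 := by
          rw [waterFilling_of_ge hg inactive, sub_zero, one_div_mul_eq_div]

theorem one_div_one_add_mul_waterFilling_le (hg : 0 < g) (hL : 0 < L) (hx : 0 ≤ x) :
    1 / (1 + g * waterFilling L g) ≤
      1 / (1 + g * x) + (x - waterFilling L g) / L ^ 2 := by
  have hw := waterFilling_nonneg L g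
  have tangent := one_div_add_sub_div_sq_le_one_div (u := 1 + g * x)
    (v := 1 + g * waterFilling L g) (by positivity) (by positivity)
  have slope := div_sq_mul_sub_waterFilling_le hg hL hx
  have tangent_eq : (1 + g * waterFilling L g - (1 + g * x)) / (1 + g * waterFilling L g) ^ 2 =
      -(g / (1 + g * waterFilling L g) ^ 2 * (x - waterFilling L g)) := by
    ring
  linarith

end Channel

theorem sum_one_div_one_add_mul_waterFilling_le {ι : Type*} {t : Finset ι} {γ κ : ι → ℝ} {L : ℝ}
    (hγ : ∀ i ∈ t, 0 < γ i) (hL : 0 < L) (hκ : ∀ i ∈ t, 0 ≤ κ i)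
    (hsum : ∑ i ∈ t, κ i ≤ ∑ i ∈ t, waterFilling L (γ i)) :
    ∑ i ∈ t, 1 / (1 + γ i * waterFilling L (γ i)) ≤ ∑ i ∈ t, 1 / (1 + γ i * κ i) := by
  calc ∑ i ∈ t, 1 / (1 + γ i * waterFilling L (γ i))
      ≤ ∑ i ∈ t, (1 / (1 + γ i * κ i) + (κ i - waterFilling L (γ i)) / L ^ 2) :=
        sum_le_sum fun i hi => one_div_one_add_mul_waterFilling_le (hγ i hi) hL (hκ i hi)
    _ = ∑ i ∈ t, 1 / (1 + γ i * κ i) +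
          (∑ i ∈ t, κ i - ∑ i ∈ t, waterFilling L (γ i)) / L ^ 2 := by
        rw [sum_add_distrib, ← sum_div, sum_sub_distrib]
    _ ≤ ∑ i ∈ t, 1 / (1 + γ i * κ i) :=
        add_le_of_nonpos_right (div_nonpos_of_nonpos_of_nonneg (sub_nonpos.mpr hsum) (sq_nonneg L))

section ActiveSet

variable {ι : Type*} {γ : ι → ℝ} {P : ℝ} {s : Finset ι} {k : ι}

/-- The water level at which the channels in `s`, all of them active, together use the budget `P`.
It has the junk value `0` when `s` is empty. -/
noncomputable def waterLevel (γ : ι → ℝ) (P : ℝ) (s : Finset ι) : ℝ :=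
  (P + ∑ i ∈ s, 1 / γ i) / ∑ i ∈ s, 1 / √(γ i)

/-- The budget at which the water level of the active channels `s` reaches the threshold
`1 / √(γ k)` of channel `k`. -/
noncomputable def activationBudget (γ : ι → ℝ) (s : Finset ι) (k : ι) : ℝ :=
  1 / √(γ k) * ∑ i ∈ s, 1 / √(γ i) - ∑ i ∈ s, 1 / γ i

/-- The nonempty set `s` is a valid set of active channels for the budget `P`: the budget suffices
to activate every channel in `s`, and no other channel would receive any power. -/
structure IsActiveSet (γ : ι → ℝ) (P : ℝ) (s : Finset ι) : Prop where
  nonempty : s.Nonempty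
  activationBudget_le : ∀ k ∈ s, activationBudget γ s k ≤ P
  le_activationBudget : ∀ k ∉ s, P ≤ activationBudget γ s k

theorem sum_one_div_sqrt_pos (hγ : ∀ i ∈ s, 0 < γ i) (hs : s.Nonempty) :
    0 < ∑ i ∈ s, 1 / √(γ i) :=
  sum_pos (fun i hi => one_div_pos.mpr (Real.sqrt_pos.mpr (hγ i hi))) hs

theorem one_div_sqrt_le_waterLevel_iff (hγ : ∀ i ∈ s, 0 < γ i) (hs : s.Nonempty) :
    1 / √(γ k) ≤ waterLevel γ P s ↔ activationBudget γ s k ≤ P := by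
  rw [waterLevel, le_div_iff₀ (sum_one_div_sqrt_pos hγ hs), activationBudget, sub_le_iff_le_add]

theorem waterLevel_le_one_div_sqrt_iff (hγ : ∀ i ∈ s, 0 < γ i) (hs : s.Nonempty) :
    waterLevel γ P s ≤ 1 / √(γ k) ↔ P ≤ activationBudget γ s k := by
  rw [waterLevel, div_le_iff₀ (sum_one_div_sqrt_pos hγ hs), activationBudget, le_sub_iff_add_le]

theorem activationBudget_insert_self [DecidableEq ι] (hγ : 0 ≤ γ k) (hk : k ∉ s) :
    activationBudget γ (insert k s) k = activationBudget γ s k := by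
  have threshold_sq : 1 / √(γ k) * (1 / √(γ k)) = 1 / γ k := by
    rw [one_div_mul_one_div, Real.mul_self_sqrt hγ]
  rw [activationBudget, activationBudget, sum_insert hk, sum_insert hk, mul_add, threshold_sq,
    add_sub_add_left_eq_sub]

theorem activationBudget_anti {j : ι} (hk : 0 < γ k) (hkj : γ k ≤ γ j) :
    activationBudget γ s j ≤ activationBudget γ s k := by
  unfold activationBudget
  gcongr

theorem isActiveSet_Iic [LinearOrder ι] [SuccOrder ι] [LocallyFiniteOrderBot ι] {m : ι}
    (hγanti : Antitone γ) (hγ : ∀ i, 0 < γ i) (hm : activationBudget γ (Iic m) m ≤ P)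
    (hsucc : ¬IsMax m → P ≤ activationBudget γ (Iic (Order.succ m)) (Order.succ m)) :
    IsActiveSet γ P (Iic m) where
  nonempty := nonempty_Iic
  activationBudget_le k hk := (activationBudget_anti (hγ _) (hγanti (mem_Iic.mp hk))).trans hm
  le_activationBudget k hk := by
    have hmk : m < k := by simpa using hk
    have not_max : ¬IsMax m := hmk.not_isMax
    calc P ≤ activationBudget γ (Iic (Order.succ m)) (Order.succ m) := hsucc not_max
      _ = activationBudget γ (Iic m) (Order.succ m) := by
          rw [← Iio_insert (Order.succ m), activationBudget_insert_self (hγ _).le notMem_Iio_self,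
            Iio_succ_eq_Iic_of_not_isMax not_max]
      _ ≤ activationBudget γ (Iic m) k :=
          activationBudget_anti (hγ _) (hγanti (Order.succ_le_of_lt hmk))

namespace IsActiveSet

theorem one_div_sqrt_le_waterLevel (h : IsActiveSet γ P s) (hγ : ∀ i, 0 < γ i) (hk : k ∈ s) :
    1 / √(γ k) ≤ waterLevel γ P s :=
  (one_div_sqrt_le_waterLevel_iff (fun i _ => hγ i) h.nonempty).mpr (h.activationBudget_le k hk)

theorem waterLevel_le_one_div_sqrt (h : IsActiveSet γ P s) (hγ : ∀ i, 0 < γ i) (hk : k ∉ s) :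
    waterLevel γ P s ≤ 1 / √(γ k) :=
  (waterLevel_le_one_div_sqrt_iff (fun i _ => hγ i) h.nonempty).mpr (h.le_activationBudget k hk)

theorem waterLevel_pos (h : IsActiveSet γ P s) (hγ : ∀ i, 0 < γ i) : 0 < waterLevel γ P s := by
  obtain ⟨i, hi⟩ := h.nonempty
  exact (one_div_pos.mpr (Real.sqrt_pos.mpr (hγ i))).trans_le (h.one_div_sqrt_le_waterLevel hγ hi)

theorem waterFilling_eq_ite [DecidableEq ι] (h : IsActiveSet γ P s) (hγ : ∀ i, 0 < γ i) (j : ι) :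
    waterFilling (waterLevel γ P s) (γ j) =
      if j ∈ s then waterLevel γ P s * (1 / √(γ j)) - 1 / γ j else 0 := by
  split_ifs with hj
  · rw [waterFilling_of_le (hγ j) (h.one_div_sqrt_le_waterLevel hγ hj), mul_one_div]
  · exact waterFilling_of_ge (hγ j) (h.waterLevel_le_one_div_sqrt hγ hj)

theorem one_div_one_add_mul_waterFilling_eq_ite [DecidableEq ι] (h : IsActiveSet γ P s)
    (hγ : ∀ i, 0 < γ i) (j : ι) :
    1 / (1 + γ j * waterFilling (waterLevel γ P s) (γ j)) =
      if j ∈ s then 1 / √(γ j) / waterLevel γ P s else 1 := by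
  split_ifs with hj
  · rw [one_add_mul_waterFilling_of_le (hγ j) (h.one_div_sqrt_le_waterLevel hγ hj), div_div,
      mul_comm]
  · rw [waterFilling_of_ge (hγ j) (h.waterLevel_le_one_div_sqrt hγ hj), mul_zero, add_zero,
      div_one]

variable [Fintype ι]

theorem sum_waterFilling (h : IsActiveSet γ P s) (hγ : ∀ i, 0 < γ i) :
    ∑ j, waterFilling (waterLevel γ P s) (γ j) = P := by
  classical
  calc ∑ j, waterFilling (waterLevel γ P s) (γ j)
      = ∑ j ∈ s, (waterLevel γ P s * (1 / √(γ j)) - 1 / γ j) := by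
        simp only [h.waterFilling_eq_ite hγ, sum_ite_mem, univ_inter]
    _ = waterLevel γ P s * ∑ j ∈ s, 1 / √(γ j) - ∑ j ∈ s, 1 / γ j := by
        rw [sum_sub_distrib, mul_sum]
    _ = P := by
        rw [waterLevel, div_mul_cancel₀ _ (sum_one_div_sqrt_pos (fun i _ => hγ i) h.nonempty).ne',
          add_sub_cancel_right]

theorem sum_one_div_one_add_mul_waterFilling (h : IsActiveSet γ P s) (hγ : ∀ i, 0 < γ i) :
    ∑ j, 1 / (1 + γ j * waterFilling (waterLevel γ P s) (γ j)) =
      (Fintype.card ι : ℝ) - #s + (∑ i ∈ s, 1 / √(γ i)) ^ 2 / (P + ∑ i ∈ s, 1 / γ i) := by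
  classical
  calc ∑ j, 1 / (1 + γ j * waterFilling (waterLevel γ P s) (γ j))
      = ∑ _ ∈ sᶜ, (1 : ℝ) + ∑ j ∈ s, 1 / √(γ j) / waterLevel γ P s := by
        simp only [h.one_div_one_add_mul_waterFilling_eq_ite hγ]
        rw [← sum_compl_add_sum s]
        congr 1
        · exact sum_congr rfl fun _ hj => if_neg (mem_compl.mp hj)
        · exact sum_congr rfl fun _ hj => if_pos hj
    _ = (Fintype.card ι : ℝ) - #s + (∑ i ∈ s, 1 / √(γ i)) / waterLevel γ P s := by
        rw [sum_const, nsmul_one, card_compl, Nat.cast_sub (card_le_univ s), sum_div]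
    _ = _ := by rw [waterLevel, div_div_eq_mul_div, sq]

end IsActiveSet

end ActiveSet

theorem stmt14_general {ι : Type*} [Fintype ι] [DecidableEq ι] {γ : ι → ℝ} (hγ : ∀ i, 0 < γ i)
    {P : ℝ} {s : Finset ι} (hs : IsActiveSet γ P s) {κstar : ι → ℝ}
    (hκstar : ∀ j, κstar j = if j ∈ s then
        ((P + ∑ i ∈ s, 1 / γ i) / (∑ i ∈ s, 1 / √(γ i))) * (1 / √(γ j)) - 1 / γ j
      else 0) :
    (∀ j, 0 ≤ κstar j) ∧
    (∑ j, κstar j = P) ∧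
    (∀ κ : ι → ℝ, (∀ j, 0 ≤ κ j) → ∑ j, κ j ≤ P →
      ∑ j, 1 / (1 + γ j * κstar j) ≤ ∑ j, 1 / (1 + γ j * κ j)) ∧
    ∑ j, 1 / (1 + γ j * κstar j) =
      (Fintype.card ι : ℝ) - #s + (∑ i ∈ s, 1 / √(γ i)) ^ 2 / (P + ∑ i ∈ s, 1 / γ i) := by
  obtain rfl : κstar = fun j => waterFilling (waterLevel γ P s) (γ j) :=
    funext fun j => (hκstar j).trans (hs.waterFilling_eq_ite hγ j).symm
  refine ⟨fun j => waterFilling_nonneg _ _, hs.sum_waterFilling hγ, fun κ hκ hbudget => ?_,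
    hs.sum_one_div_one_add_mul_waterFilling hγ⟩
  exact sum_one_div_one_add_mul_waterFilling_le (fun i _ => hγ i) (hs.waterLevel_pos hγ)
    (fun i _ => hκ i) (hbudget.trans_eq (hs.sum_waterFilling hγ).symm)

/-- Water-filling solution of the scalar problem in the proof of Theorem 5.
Indices are 0-based: `mstar : Fin n` represents `m_* = mstar + 1`, and the sums
`Σ_{i=1}^{m_*}` become sums over `i ∈ Finset.Iic mstar`.  The allocation `κ*` is
nonnegative, exhausts the budget, minimizes `Σ_j 1/(1 + γ_j κ_j)` among all nonnegative
allocations meeting the budget, and attains the stated optimal value. -/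
theorem stmt14 (n : ℕ) (hn : 1 ≤ n) (γ : Fin n → ℝ) (hγanti : Antitone γ)
    (hγpos : ∀ i, 0 < γ i) (Pbudget : ℝ) (hP : 0 < Pbudget)
    (mstar : Fin n)
    (hcond : (1 / Real.sqrt (γ mstar)) * (∑ i ∈ Finset.Iic mstar, 1 / Real.sqrt (γ i))
        - ∑ i ∈ Finset.Iic mstar, 1 / γ i < Pbudget)
    (hmax : ∀ k : Fin n, mstar < k →
      ¬((1 / Real.sqrt (γ k)) * (∑ i ∈ Finset.Iic k, 1 / Real.sqrt (γ i))
        - ∑ i ∈ Finset.Iic k, 1 / γ i < Pbudget))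
    (κstar : Fin n → ℝ)
    (hκstar : ∀ j, κstar j = if j ≤ mstar then
        ((Pbudget + ∑ i ∈ Finset.Iic mstar, 1 / γ i) /
            (∑ i ∈ Finset.Iic mstar, 1 / Real.sqrt (γ i))) * (1 / Real.sqrt (γ j))
          - 1 / γ j
      else 0) :
    (∀ j, 0 ≤ κstar j) ∧
    (∑ j, κstar j = Pbudget) ∧
    (∀ κ : Fin n → ℝ, (∀ j, 0 ≤ κ j) → ∑ j, κ j ≤ Pbudget →
      ∑ j, 1 / (1 + γ j * κstar j) ≤ ∑ j, 1 / (1 + γ j * κ j)) ∧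
    ∑ j, 1 / (1 + γ j * κstar j) =
      (n : ℝ) - ((mstar : ℕ) + 1) +
        (∑ i ∈ Finset.Iic mstar, 1 / Real.sqrt (γ i)) ^ 2
          / (Pbudget + ∑ i ∈ Finset.Iic mstar, 1 / γ i) := by
  have active : IsActiveSet γ Pbudget (Iic mstar) := isActiveSet_Iic hγanti hγpos hcond.le
    fun not_max => not_lt.mp (hmax _ (Order.lt_succ_of_not_isMax not_max))
  simpa using stmt14_general hγpos active (by simpa using hκstar)
end
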